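/- Let d≥1 and γ>0 be constants. Then for any constants D>0 and ε>0, with high probability over the choice of G∼G(n,d/n), the marginal distribution μ_{G,γ,F} of the monomer-dimer distribution μ_{G,γ} on F, where F is the set of edges of G both of whose endpoints have degree at most D, is (ε·log n)-spectrally independent. -/

import Mathlib

/-!
The marginal of the monomer-dimer distribution on any set of edges is `4γΔ`-spectrally
independent when `G` has maximum degree `Δ`, and the maximum degree of
`G(n, d/n)` is at most `δ log n` with high probability for every fixed `δ > 0`.

*Spectral independence.* Deleting a vertex `v` changes the edge occupation probabilities by at
most `γΔ` in total (`sum_abs_occ_del`). Uncover the partner of `v`: if `v` is unmatched, nothing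
changes; if `v` is matched along `f = vu`, the discrepancy is the edge `f` itself plus the effect
of deleting `u` from the graph without `v`. Since `v` is matched with probability at most
`γΔ / (1 + γΔ)`, induction on the number of edges gives the total
`γΔ / (1 + γΔ) * (1 + γΔ) = γΔ`.
Conditioning an edge to be in the matching deletes its two endpoints, and conditioning it to be
out is compared with this by the law of total probability, so either costs at most `2γΔ`
(`row_sum`). A pinning only passes to a smaller edge set (`exists_pinned`). Counting both states
of the target edge, every absolute row sum of the influence matrix is at most `4γΔ`, which bounds
its real eigenvalues (`eigenvalue_le`).

*Random graph.* The number of edges at a vertex has moment generating function at most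
`exp (d (s - 1))` at `log s` (`mgf_degree`). Markov's inequality with `s = exp (8γ/ε)` and a union
bound over the `n` vertices show that some degree exceeds `ε log n / (4γ)` with probability at
most `exp (d (s - 1)) / n`.
-/

open Classical Filter

/-- The degree of a vertex. -/
noncomputable def deg {V : Type*} (G : SimpleGraph V) (v : V) : ℕ :=
  Nat.card {u : V // G.Adj v u}

/-- The number of edges of a graph. -/
noncomputable def edgeCount {V : Type*} (G : SimpleGraph V) : ℕ :=
  Nat.card G.edgeSet

/-- The probability that the Erdős–Rényi random graph `G(n,p)` satisfies property `P`:
each of the `n(n-1)/2` possible edges is present independently with probability `p`. -/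
noncomputable def erProb (n : ℕ) (p : ℝ) (P : SimpleGraph (Fin n) → Prop) : ℝ :=
  ∑ G : SimpleGraph (Fin n),
    (if P G then p ^ edgeCount G * (1 - p) ^ (n.choose 2 - edgeCount G) else 0)

/-- The probability of an event `A` under the (possibly unnormalised) distribution `μ`
on configurations `α → Bool`. -/
noncomputable def pr {α : Type*} [Fintype α] (μ : (α → Bool) → ℝ) (A : Set (α → Bool)) : ℝ :=
  ∑ σ : α → Bool, if σ ∈ A then μ σ else 0

/-- Conditional probability `μ(A | B)`. -/
noncomputable def cpr {α : Type*} [Fintype α] (μ : (α → Bool) → ℝ) (A B : Set (α → Bool)) : ℝ :=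
  pr μ (A ∩ B) / pr μ B

/-- The event that the configuration agrees with `τ` on `S`. -/
def eventEq {α : Type*} (S : Set α) (τ : α → Bool) : Set (α → Bool) := {σ | ∀ v ∈ S, σ v = τ v}

/-- The event that site `v` has spin `i`. -/
def eventVal {α : Type*} (v : α) (i : Bool) : Set (α → Bool) := {σ | σ v = i}

/-- The marginal of the distribution `μ` on the coordinates in `U`. -/
noncomputable def marginal {V : Type*} [Fintype V] (μ : (V → Bool) → ℝ) (U : Set V) :
    (↥U → Bool) → ℝ :=
  fun τ => ∑ σ : V → Bool, if ∀ u : ↥U, σ u.1 = τ u then μ σ else 0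

/-- `μ` is `η`-spectrally independent: for every proper subset `S` of the sites and every
conditioning `τ` on `S` of positive probability, every (real) eigenvalue of the influence
matrix `Ψ_τ` (indexed by pairs `(v,i)` with `v ∉ S` and `μ_τ(σ_v = i) > 0`, with entries
`μ_τ(σ_w = k | σ_v = i) - μ_τ(σ_w = k)` off the diagonal blocks `v = w`, and `0` there)
is at most `η`. -/
def SpectrallyIndependent {α : Type*} [Fintype α] (μ : (α → Bool) → ℝ) (η : ℝ) : Prop :=
  ∀ (S : Set α) (τ : α → Bool), S ≠ Set.univ → 0 < pr μ (eventEq S τ) →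
    ∀ (t : ℝ)
      (x : {p : α × Bool // p.1 ∉ S ∧ 0 < cpr μ (eventVal p.1 p.2) (eventEq S τ)} → ℝ),
      x ≠ 0 →
      (Matrix.of fun p q :
          {p : α × Bool // p.1 ∉ S ∧ 0 < cpr μ (eventVal p.1 p.2) (eventEq S τ)} =>
          if p.1.1 = q.1.1 then (0 : ℝ)
          else cpr μ (eventVal q.1.1 q.1.2) (eventEq S τ ∩ eventVal p.1.1 p.1.2)
               - cpr μ (eventVal q.1.1 q.1.2) (eventEq S τ)).mulVec x = t • x →
      t ≤ η

/-- A configuration `σ : Sym2 V → Bool` is the indicator of a matching of `G`. -/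
def IsMatchingConf {V : Type*} (G : SimpleGraph V) (σ : Sym2 V → Bool) : Prop :=
  (∀ e, σ e = true → e ∈ G.edgeSet) ∧
  ∀ e f, σ e = true → σ f = true → e ≠ f → ∀ v, v ∈ e → v ∉ f

/-- Weight `γ^{|M|}` of a matching configuration (and `0` otherwise). -/
noncomputable def mdWeight {V : Type*} [Fintype V] [DecidableEq V] (G : SimpleGraph V)
    (γ : ℝ) (σ : Sym2 V → Bool) : ℝ :=
  if IsMatchingConf G σ then γ ^ (Finset.univ.filter (fun e : Sym2 V => σ e = true)).card else 0

/-- The monomer-dimer distribution `μ_{G,γ}` viewed on configurations `Sym2 V → Bool`. -/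
noncomputable def monomerDimer {V : Type*} [Fintype V] [DecidableEq V] (G : SimpleGraph V)
    (γ : ℝ) : (Sym2 V → Bool) → ℝ :=
  fun σ => mdWeight G γ σ / ∑ σ' : Sym2 V → Bool, mdWeight G γ σ'

/-! ### Matchings and edge occupation probabilities -/

section Matchings

lemma exists_mem_sym2 {V : Type*} (e : Sym2 V) : ∃ v, v ∈ e := by
  induction e with | _ a b => exact ⟨a, by simp⟩

variable {V : Type*} [Fintype V] [DecidableEq V]

/-- The matchings contained in a set `A` of edges, as sets of pairwise disjoint edges. Loops are
allowed in `A`; nothing below depends on excluding them. -/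
noncomputable def matchings (A : Finset (Sym2 V)) : Finset (Finset (Sym2 V)) :=
  A.powerset.filter fun M => ∀ e ∈ M, ∀ f ∈ M, e ≠ f → ∀ v, v ∈ e → v ∉ f

/-- The edges of `A` avoiding the vertex `v`. -/
noncomputable def del (A : Finset (Sym2 V)) (v : V) : Finset (Sym2 V) :=
  A.filter fun f => v ∉ f

/-- The edges of `A` disjoint from the edge `e`. -/
noncomputable def off (A : Finset (Sym2 V)) (e : Sym2 V) : Finset (Sym2 V) :=
  A.filter fun f => ∀ v ∈ e, v ∉ f

/-- The total weight of the matchings in `A` with property `P`. -/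
noncomputable def wt (γ : ℝ) (A : Finset (Sym2 V)) (P : Finset (Sym2 V) → Prop) : ℝ :=
  ∑ M ∈ matchings A, if P M then γ ^ M.card else 0

/-- The partition function of the monomer-dimer model on the edge set `A`. -/
noncomputable def part (γ : ℝ) (A : Finset (Sym2 V)) : ℝ := wt γ A fun _ => True

/-- The probability that a random matching in `A` contains the edge `g`. -/
noncomputable def occ (γ : ℝ) (A : Finset (Sym2 V)) (g : Sym2 V) : ℝ :=
  wt γ A (fun M => g ∈ M) / part γ A

lemma mem_matchings {A M : Finset (Sym2 V)} : M ∈ matchings A ↔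
    M ⊆ A ∧ ∀ e ∈ M, ∀ f ∈ M, e ≠ f → ∀ v, v ∈ e → v ∉ f := by
  simp [matchings]

lemma off_pair (A : Finset (Sym2 V)) (v u : V) : off A s(v, u) = del (del A v) u := by
  ext f; simp [off, del, and_assoc]

lemma wt_nonneg {γ : ℝ} (hγ : 0 < γ) (A : Finset (Sym2 V)) (P) : 0 ≤ wt γ A P :=
  Finset.sum_nonneg fun M _ => by split_ifs <;> positivity

lemma wt_congr (γ : ℝ) {A : Finset (Sym2 V)} {P Q : Finset (Sym2 V) → Prop}
    (h : ∀ M ∈ matchings A, (P M ↔ Q M)) : wt γ A P = wt γ A Q :=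
  Finset.sum_congr rfl fun M hM => by simp only [h M hM]

lemma part_pos {γ : ℝ} (hγ : 0 < γ) (A : Finset (Sym2 V)) : 0 < part γ A := by
  unfold part wt
  simp only [if_true]
  exact Finset.sum_pos (fun M _ => by positivity) ⟨∅, by simp [mem_matchings]⟩

lemma part_mono {γ : ℝ} (hγ : 0 < γ) {A B : Finset (Sym2 V)} (h : A ⊆ B) :
    part γ A ≤ part γ B := by
  unfold part wt
  simp only [if_true]
  refine Finset.sum_le_sum_of_subset_of_nonneg (fun M hM => ?_) (fun M _ _ => by positivity)
  rw [mem_matchings] at hM ⊢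
  exact ⟨hM.1.trans h, hM.2⟩

lemma wt_not (γ : ℝ) (A : Finset (Sym2 V)) (P Q : Finset (Sym2 V) → Prop) :
    wt γ A (fun M => ¬ P M ∧ Q M) = wt γ A Q - wt γ A (fun M => P M ∧ Q M) := by
  unfold wt
  rw [← Finset.sum_sub_distrib]
  refine Finset.sum_congr rfl fun M _ => ?_
  by_cases h1 : P M <;> by_cases h2 : Q M <;> simp [h1, h2]

/-- Matchings through `e` are matchings disjoint from `e` with `e` added. -/
lemma wt_mem (γ : ℝ) {A : Finset (Sym2 V)} {e : Sym2 V} (he : e ∈ A)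
    (P : Finset (Sym2 V) → Prop) :
    wt γ A (fun M => P M ∧ e ∈ M) = γ * wt γ (off A e) (fun M => P (insert e M)) := by
  have hoff : ∀ M ∈ matchings (off A e), e ∉ M := by
    intro M hM h
    obtain ⟨v, hv⟩ := exists_mem_sym2 e
    have := (mem_matchings.1 hM).1 h
    simp only [off, Finset.mem_filter] at this
    exact this.2 v hv hv
  have h1 : wt γ A (fun M => P M ∧ e ∈ M)
      = ∑ M ∈ (matchings A).filter (fun M => e ∈ M), if P M then γ ^ M.card else 0 := by
    unfold wt
    rw [Finset.sum_filter]
    refine Finset.sum_congr rfl fun M _ => ?_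
    by_cases h1 : P M <;> by_cases h2 : e ∈ M <;> simp [h1, h2]
  rw [h1]
  unfold wt
  rw [Finset.mul_sum]
  symm
  refine Finset.sum_bij' (fun M _ => insert e M) (fun M _ => M.erase e) ?_ ?_ ?_ ?_ ?_
  · intro M hM
    have hM' := mem_matchings.1 hM
    simp only [Finset.mem_filter, mem_matchings, Finset.mem_insert_self, and_true]
    refine ⟨?_, ?_⟩
    · refine Finset.insert_subset he (hM'.1.trans (Finset.filter_subset _ _))
    · intro a ha b hb hab v hva hvb
      rw [Finset.mem_insert] at ha hb
      rcases ha with rfl | ha <;> rcases hb with rfl | hb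
      · exact hab rfl
      · exact (Finset.mem_filter.1 (hM'.1 hb)).2 v hva hvb
      · exact (Finset.mem_filter.1 (hM'.1 ha)).2 v hvb hva
      · exact hM'.2 a ha b hb hab v hva hvb
  · intro M hM
    rw [Finset.mem_filter, mem_matchings] at hM
    obtain ⟨⟨h1, h2⟩, h3⟩ := hM
    rw [mem_matchings]
    refine ⟨fun f hf => ?_, fun a ha b hb => h2 a (Finset.mem_of_mem_erase ha) b
      (Finset.mem_of_mem_erase hb)⟩
    rw [Finset.mem_erase] at hf
    exact Finset.mem_filter.2 ⟨h1 hf.2, fun v hv => h2 e h3 f hf.2 (Ne.symm hf.1) v hv⟩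
  · intro M hM
    exact Finset.erase_insert (hoff M hM)
  · intro M hM
    exact Finset.insert_erase (Finset.mem_filter.1 hM).2
  · intro M hM
    rw [Finset.card_insert_of_notMem (hoff M hM), pow_succ]
    split_ifs <;> ring

lemma wt_notMem (γ : ℝ) (A : Finset (Sym2 V)) (e : Sym2 V) (P : Finset (Sym2 V) → Prop) :
    wt γ A (fun M => P M ∧ e ∉ M) = wt γ (A.erase e) P := by
  have h1 : wt γ A (fun M => P M ∧ e ∉ M)
      = ∑ M ∈ (matchings A).filter (fun M => e ∉ M), if P M then γ ^ M.card else 0 := by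
    unfold wt
    rw [Finset.sum_filter]
    refine Finset.sum_congr rfl fun M _ => ?_
    by_cases h1 : P M <;> by_cases h2 : e ∈ M <;> simp [h1, h2]
  rw [h1]
  unfold wt
  refine Finset.sum_congr ?_ fun _ _ => rfl
  ext M
  simp only [Finset.mem_filter, mem_matchings, Finset.subset_erase]
  tauto

/-- Splitting matchings according to the edge, if any, that covers the vertex `v`. -/
lemma wt_split (γ : ℝ) (A : Finset (Sym2 V)) (v : V) (P : Finset (Sym2 V) → Prop) :
    wt γ A P = wt γ (del A v) P
      + ∑ f ∈ A.filter (fun f => v ∈ f), γ * wt γ (off A f) (fun M => P (insert f M)) := by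
  have h1 : wt γ (del A v) P = wt γ A (fun M => P M ∧ ∀ f ∈ M, v ∉ f) := by
    have : matchings (del A v) = (matchings A).filter (fun M => ∀ f ∈ M, v ∉ f) := by
      ext M
      simp only [Finset.mem_filter, mem_matchings, del, Finset.subset_iff]
      constructor
      · rintro ⟨h1, h2⟩
        exact ⟨⟨fun x hx => (h1 hx).1, h2⟩, fun x hx => (h1 hx).2⟩
      · rintro ⟨⟨h1, h2⟩, h3⟩
        exact ⟨fun x hx => ⟨h1 hx, h3 x hx⟩, h2⟩
    unfold wt
    rw [this, Finset.sum_filter]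
    refine Finset.sum_congr rfl fun M _ => ?_
    by_cases h1 : P M <;> by_cases h2 : ∀ f ∈ M, v ∉ f <;> simp only [h1, h2] <;> simp
  have h2 : ∀ f ∈ A.filter (fun f => v ∈ f),
      γ * wt γ (off A f) (fun M => P (insert f M)) = wt γ A (fun M => P M ∧ f ∈ M) :=
    fun f hf => (wt_mem γ (Finset.mem_filter.1 hf).1 P).symm
  rw [h1, Finset.sum_congr rfl h2]
  unfold wt
  rw [Finset.sum_comm, ← Finset.sum_add_distrib]
  refine Finset.sum_congr rfl fun M hM => ?_
  have hM' := mem_matchings.1 hM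
  by_cases hP : P M
  swap
  · simp [hP]
  by_cases hv : ∀ f ∈ M, v ∉ f
  · rw [if_pos hP, if_pos ⟨hP, hv⟩, Finset.sum_eq_zero, add_zero]
    intro f hf
    rw [if_neg]
    rintro ⟨-, h⟩
    exact hv f h (Finset.mem_filter.1 hf).2
  · rw [if_pos hP, if_neg (fun h => hv h.2), zero_add]
    push Not at hv
    obtain ⟨f, hf, hvf⟩ := hv
    rw [Finset.sum_eq_single f]
    · simp [hP, hf]
    · intro b hb hbf
      rw [if_neg]
      rintro ⟨-, h⟩
      exact hM'.2 b h f hf hbf v (Finset.mem_filter.1 hb).2 hvf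
    · intro h
      exact absurd (Finset.mem_filter.2 ⟨hM'.1 hf, hvf⟩) h

lemma part_split (γ : ℝ) (A : Finset (Sym2 V)) (v : V) :
    part γ A = part γ (del A v) + ∑ f ∈ A.filter (fun f => v ∈ f), γ * part γ (off A f) :=
  wt_split γ A v _

lemma wt_insert_mem {γ : ℝ} (A : Finset (Sym2 V)) (f g : Sym2 V) :
    wt γ (off A f) (fun M => g ∈ insert f M)
      = (if g = f then part γ (off A f) else 0) + wt γ (off A f) (fun M => g ∈ M) := by
  unfold part wt
  by_cases h : g = f
  · subst h
    rw [if_pos rfl, ← Finset.sum_add_distrib]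
    refine Finset.sum_congr rfl fun M hM => ?_
    have : g ∉ M := by
      intro h
      obtain ⟨v, hv⟩ := exists_mem_sym2 g
      exact (Finset.mem_filter.1 ((mem_matchings.1 hM).1 h)).2 v hv hv
    simp [this]
  · rw [if_neg h, zero_add]
    refine Finset.sum_congr rfl fun M _ => ?_
    by_cases hM : g ∈ M <;> simp [h, hM]

lemma wt_eq_occ {γ : ℝ} (hγ : 0 < γ) (A : Finset (Sym2 V)) (g : Sym2 V) :
    wt γ A (fun M => g ∈ M) = occ γ A g * part γ A := by
  have := part_pos hγ A
  unfold occ; field_simp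

/-- The one-step recursion: uncovering the partner of `v` expresses the effect of deleting `v`
through the effects of deleting a neighbour of `v` from the graph without `v`. -/
lemma occ_split {γ : ℝ} (hγ : 0 < γ) (A : Finset (Sym2 V)) (v : V) (g : Sym2 V) :
    occ γ A g - occ γ (del A v) g = ∑ f ∈ A.filter (fun f => v ∈ f),
      γ * part γ (off A f) / part γ A *
        ((if g = f then 1 else 0) + (occ γ (off A f) g - occ γ (del A v) g)) := by
  have hZ := part_pos hγ A
  have h1 : occ γ A g * part γ A - occ γ (del A v) g * part γ A
      = ∑ f ∈ A.filter (fun f => v ∈ f), γ * part γ (off A f) *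
        ((if g = f then 1 else 0) + (occ γ (off A f) g - occ γ (del A v) g)) := by
    rw [← wt_eq_occ hγ, wt_split γ A v, part_split γ A v, mul_add, wt_eq_occ hγ, add_sub_add_left_eq_sub,
      Finset.mul_sum, ← Finset.sum_sub_distrib]
    refine Finset.sum_congr rfl fun f _ => ?_
    rw [wt_insert_mem, wt_eq_occ hγ]
    split_ifs <;> ring
  have h2 : occ γ A g - occ γ (del A v) g
      = (occ γ A g * part γ A - occ γ (del A v) g * part γ A) / part γ A := by
    field_simp
  rw [h2, h1, Finset.sum_div]
  refine Finset.sum_congr rfl fun f _ => by ring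

/-- Deleting a vertex changes the edge occupation probabilities by at most `γΔ` in total. The
vertex is covered with probability at most `γΔ / (1 + γΔ)`, and this is the contraction factor
of the recursion `occ_split`. -/
lemma sum_abs_occ_del {γ : ℝ} (hγ : 0 < γ) (K : ℝ) (hK : 0 ≤ K) :
    ∀ (n : ℕ) (A : Finset (Sym2 V)), A.card ≤ n →
      (∀ v, ((A.filter (fun f => v ∈ f)).card : ℝ) ≤ K) → ∀ v,
      ∑ g, |occ γ A g - occ γ (del A v) g| ≤ γ * K := by
  intro n
  induction n with
  | zero =>
    intro A hA _ v
    have : A = ∅ := Finset.card_eq_zero.1 (Nat.le_zero.1 hA)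
    subst this
    simp [del]; positivity
  | succ n ih =>
    intro A hA hdeg v
    by_cases hv : A.filter (fun f => v ∈ f) = ∅
    · have : del A v = A := by
        unfold del
        rw [Finset.filter_eq_empty_iff] at hv
        exact Finset.filter_true_of_mem fun f hf => hv hf
      simp [this]; positivity
    have hsub : del A v ⊆ A := Finset.filter_subset _ _
    have hcard : (del A v).card ≤ n := by
      obtain ⟨f, hf⟩ := Finset.nonempty_of_ne_empty hv
      rw [Finset.mem_filter] at hf
      have : del A v ⊂ A := Finset.ssubset_iff_subset_ne.2 ⟨hsub, fun h => by
        have := hf.1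
        rw [← h, del, Finset.mem_filter] at this
        exact this.2 hf.2⟩
      have := Finset.card_lt_card this
      omega
    have hdeg' : ∀ w, (((del A v).filter (fun f => w ∈ f)).card : ℝ) ≤ K := fun w =>
      le_trans (by exact_mod_cast Finset.card_le_card (Finset.filter_subset_filter _ hsub))
        (hdeg w)
    have hZ := part_pos hγ A
    have hZd := part_pos hγ (del A v)
    have key : ∀ f ∈ A.filter (fun f => v ∈ f),
        ∑ g, |(if g = f then (1:ℝ) else 0) + (occ γ (off A f) g - occ γ (del A v) g)|
          ≤ 1 + γ * K := by
      intro f hf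
      obtain ⟨u, rfl⟩ := (Finset.mem_filter.1 hf).2
      calc _ ≤ ∑ g, (|(if g = s(v, u) then (1:ℝ) else 0)|
              + |occ γ (off A s(v, u)) g - occ γ (del A v) g|) :=
            Finset.sum_le_sum fun g _ => abs_add_le _ _
        _ ≤ _ := by
            rw [Finset.sum_add_distrib]
            have h1 : ∑ g, |(if g = s(v, u) then (1:ℝ) else 0)| = 1 := by
              rw [Finset.sum_eq_single s(v, u)] <;> simp +contextual
            have h2 := ih (del A v) hcard hdeg' u
            rw [h1, off_pair]
            simp only [abs_sub_comm (occ γ (del (del A v) u) _)]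
            linarith
    have hcov : ∑ f ∈ A.filter (fun f => v ∈ f), γ * part γ (off A f) / part γ A
        = 1 - part γ (del A v) / part γ A := by
      rw [← Finset.sum_div, eq_sub_iff_add_eq, ← add_div, add_comm, ← part_split γ A v,
        div_self hZ.ne']
    -- each neighbour contributes at most `γ * part γ (del A v)` to the partition function
    have hZle : part γ A ≤ (1 + γ * K) * part γ (del A v) := by
      rw [part_split γ A v]
      have : ∑ f ∈ A.filter (fun f => v ∈ f), γ * part γ (off A f)
          ≤ ∑ f ∈ A.filter (fun f => v ∈ f), γ * part γ (del A v) := by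
        refine Finset.sum_le_sum fun f hf => mul_le_mul_of_nonneg_left (part_mono hγ ?_) hγ.le
        intro e he
        simp only [off, del, Finset.mem_filter] at he hf ⊢
        exact ⟨he.1, he.2 v hf.2⟩
      rw [Finset.sum_const, nsmul_eq_mul] at this
      have h3 := mul_le_mul_of_nonneg_right (hdeg v) (mul_pos hγ hZd).le
      nlinarith
    calc ∑ g, |occ γ A g - occ γ (del A v) g|
        ≤ ∑ g, ∑ f ∈ A.filter (fun f => v ∈ f), γ * part γ (off A f) / part γ A *
          |(if g = f then (1:ℝ) else 0) + (occ γ (off A f) g - occ γ (del A v) g)| := by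
          refine Finset.sum_le_sum fun g _ => ?_
          rw [occ_split hγ]
          refine (Finset.abs_sum_le_sum_abs _ _).trans (le_of_eq ?_)
          refine Finset.sum_congr rfl fun f _ => ?_
          rw [abs_mul, abs_of_nonneg]
          have := part_pos hγ (off A f)
          positivity
      _ = ∑ f ∈ A.filter (fun f => v ∈ f), γ * part γ (off A f) / part γ A * ∑ g,
          |(if g = f then (1:ℝ) else 0) + (occ γ (off A f) g - occ γ (del A v) g)| := by
          rw [Finset.sum_comm]
          simp only [Finset.mul_sum]
      _ ≤ ∑ f ∈ A.filter (fun f => v ∈ f), γ * part γ (off A f) / part γ A * (1 + γ * K) := by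
          refine Finset.sum_le_sum fun f hf => mul_le_mul_of_nonneg_left (key f hf) ?_
          have := part_pos hγ (off A f)
          positivity
      _ = (1 - part γ (del A v) / part γ A) * (1 + γ * K) := by
          rw [← Finset.sum_mul, hcov]
      _ ≤ γ * K := by
          have : 1 ≤ part γ (del A v) / part γ A * (1 + γ * K) := by
            rw [div_mul_eq_mul_div, le_div_iff₀ hZ]; linarith
          linarith

/-- Deleting both endpoints of an edge costs at most twice the bound for one vertex. -/
lemma sum_abs_occ_off {γ : ℝ} (hγ : 0 < γ) (K : ℝ) (hK : 0 ≤ K) (A : Finset (Sym2 V))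
    (hdeg : ∀ v, ((A.filter (fun f => v ∈ f)).card : ℝ) ≤ K) (e : Sym2 V) :
    ∑ g, |occ γ (off A e) g - occ γ A g| ≤ 2 * (γ * K) := by
  induction e with | _ v u =>
  have hdeg' : ∀ w, (((del A v).filter (fun f => w ∈ f)).card : ℝ) ≤ K := fun w =>
    le_trans (Nat.cast_le.2 <| Finset.card_le_card <|
      Finset.filter_subset_filter _ <| Finset.filter_subset _ _) (hdeg w)
  have h1 := sum_abs_occ_del hγ K hK _ A le_rfl hdeg v
  have h2 := sum_abs_occ_del hγ K hK _ (del A v) le_rfl hdeg' u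
  rw [off_pair]
  calc _ ≤ ∑ g, (|occ γ A g - occ γ (del A v) g|
        + |occ γ (del A v) g - occ γ (del (del A v) u) g|) := by
        refine Finset.sum_le_sum fun g _ => ?_
        rw [abs_sub_comm]
        exact abs_sub_le _ _ _
    _ ≤ _ := by rw [Finset.sum_add_distrib]; linarith

/-- Conditioning on the state of the edge `e` changes the probabilities of the other edges being
in state `k` by at most `2γΔ` in total. -/
lemma row_sum {γ : ℝ} (hγ : 0 < γ) (K : ℝ) (hK : 0 ≤ K) (A : Finset (Sym2 V))
    (hdeg : ∀ v, ((A.filter (fun f => v ∈ f)).card : ℝ) ≤ K) (e : Sym2 V) (i k : Bool)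
    (hpos : 0 < wt γ A (fun M => decide (e ∈ M) = i)) :
    ∑ g ∈ Finset.univ.erase e,
      |wt γ A (fun M => decide (g ∈ M) = k ∧ decide (e ∈ M) = i)
          / wt γ A (fun M => decide (e ∈ M) = i)
        - wt γ A (fun M => decide (g ∈ M) = k) / part γ A| ≤ 2 * (γ * K) := by
  have hZ := part_pos hγ A
  -- the two states of `g` have opposite deviations
  have hk : ∀ g, |wt γ A (fun M => decide (g ∈ M) = k ∧ decide (e ∈ M) = i)
          / wt γ A (fun M => decide (e ∈ M) = i)
        - wt γ A (fun M => decide (g ∈ M) = k) / part γ A|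
      = |wt γ A (fun M => g ∈ M ∧ decide (e ∈ M) = i)
          / wt γ A (fun M => decide (e ∈ M) = i) - occ γ A g| := by
    intro g
    cases k
    · have h1 := wt_not γ A (fun M => g ∈ M) (fun M => decide (e ∈ M) = i)
      have h2 := wt_not γ A (fun M => g ∈ M) (fun _ => True)
      simp only [and_true] at h2
      simp only [decide_eq_false_iff_not]
      rw [h1, h2, occ, ← abs_neg, sub_div, sub_div, div_self hpos.ne']
      change |-(1 - _ - (part γ A / part γ A - _))| = _
      rw [div_self hZ.ne']
      ring_nf
    · simp only [decide_eq_true_eq, occ]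
  rw [Finset.sum_congr rfl fun g _ => hk g]
  cases i
  · simp only [decide_eq_false_iff_not] at hpos ⊢
    have hB : wt γ A (fun M => e ∉ M) = part γ (A.erase e) := by
      have := wt_notMem γ A e (fun _ => True)
      simp only [true_and] at this
      exact this
    have hB' := part_pos hγ (A.erase e)
    have hO := part_pos hγ (off A e)
    have hNN : ∀ g, wt γ A (fun M => g ∈ M ∧ e ∉ M) = occ γ (A.erase e) g * part γ (A.erase e) :=
      fun g => by rw [wt_notMem, wt_eq_occ hγ]
    simp only [hB, hNN]
    have hoff : off (A.erase e) e = off A e := by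
      ext f
      simp only [off, Finset.mem_filter, Finset.mem_erase]
      constructor
      · rintro ⟨⟨_, h⟩, h'⟩; exact ⟨h, h'⟩
      · rintro ⟨h, h'⟩
        refine ⟨⟨?_, h⟩, h'⟩
        rintro rfl
        obtain ⟨v, hv⟩ := exists_mem_sym2 f
        exact h' v hv hv
    have hdeg' : ∀ w, (((A.erase e).filter (fun f => w ∈ f)).card : ℝ) ≤ K := fun w =>
      le_trans (Nat.cast_le.2 <| Finset.card_le_card <|
        Finset.filter_subset_filter _ <| Finset.erase_subset _ _) (hdeg w)
    have hmain := sum_abs_occ_off hγ K hK (A.erase e) hdeg' e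
    rw [hoff] at hmain
    by_cases he : e ∈ A
    · have hsplit : part γ A = γ * part γ (off A e) + part γ (A.erase e) := by
        have h1 := wt_mem γ he (fun _ => True)
        have h2 := wt_not γ A (fun M => e ∈ M) (fun _ => True)
        simp only [true_and, and_true] at h1 h2
        rw [hB, h1] at h2
        change _ = part γ A - γ * part γ (off A e) at h2
        linarith
      refine le_trans (Finset.sum_le_sum (g := fun g =>
        |occ γ (off A e) g - occ γ (A.erase e) g|) ?_)
        (le_trans (Finset.sum_le_sum_of_subset_of_nonneg (Finset.subset_univ _)
          fun _ _ _ => abs_nonneg _) hmain)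
      intro g hg
      have hge : g ≠ e := (Finset.mem_erase.1 hg).1
      -- the law of total probability for the state of `e`
      have hocc : occ γ A g * part γ A = γ * (occ γ (off A e) g * part γ (off A e))
          + occ γ (A.erase e) g * part γ (A.erase e) := by
        rw [← hNN, ← wt_eq_occ hγ, ← wt_eq_occ hγ]
        have h1 := wt_mem γ he (fun M => g ∈ M)
        have h2 := wt_not γ A (fun M => e ∈ M) (fun M => g ∈ M)
        rw [wt_insert_mem, if_neg hge, zero_add] at h1
        rw [← h1]
        simp only [and_comm (a := e ∈ _), and_comm (a := e ∉ _)] at h2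
        linarith
      rw [mul_div_cancel_right₀ _ hB'.ne']
      have : occ γ (A.erase e) g - occ γ A g = -(γ * part γ (off A e) / part γ A
          * (occ γ (off A e) g - occ γ (A.erase e) g)) := by
        have hx : occ γ A g = (γ * (occ γ (off A e) g * part γ (off A e))
          + occ γ (A.erase e) g * part γ (A.erase e)) / part γ A := by
          rw [← hocc, mul_div_cancel_right₀ _ hZ.ne']
        rw [hx]
        field_simp
        rw [hsplit]; ring
      rw [this, abs_neg, abs_mul]
      refine mul_le_of_le_one_left (abs_nonneg _) ?_
      rw [abs_of_nonneg (by positivity), div_le_one hZ]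
      linarith
    · rw [Finset.erase_eq_of_notMem he]
      refine le_trans (le_of_eq (Finset.sum_eq_zero fun g _ => ?_)) (by positivity)
      rw [mul_div_cancel_right₀ _ hZ.ne', sub_self, abs_zero]
  · simp only [decide_eq_true_eq] at hpos ⊢
    have he : e ∈ A := by
      by_contra he
      refine hpos.ne' (Finset.sum_eq_zero fun M hM => if_neg fun h => he ?_)
      exact (mem_matchings.1 hM).1 h
    have hO := part_pos hγ (off A e)
    have hB : wt γ A (fun M => e ∈ M) = γ * part γ (off A e) := by
      have := wt_mem γ he (fun _ => True)
      simp only [true_and] at this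
      exact this
    refine le_trans (Finset.sum_le_sum (g := fun g => |occ γ (off A e) g - occ γ A g|) ?_)
      (le_trans (Finset.sum_le_sum_of_subset_of_nonneg (Finset.subset_univ _)
        fun _ _ _ => abs_nonneg _) (sum_abs_occ_off hγ K hK A hdeg e))
    intro g hg
    rw [hB, wt_mem γ he, wt_insert_mem, if_neg (Finset.mem_erase.1 hg).1, zero_add,
      mul_div_mul_left _ _ hγ.ne']
    rfl

/-- Pinning: matchings of `E` meeting `S` exactly in the matching `T` are the matchings of the
edges of `E` outside `S` and disjoint from `T`, with `T` added. -/
lemma wt_pin (γ : ℝ) (E S T : Finset (Sym2 V)) (hTS : T ⊆ S) (hT : T ∈ matchings E)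
    (P : Finset (Sym2 V) → Prop) :
    wt γ E (fun M => P M ∧ ∀ e ∈ S, (e ∈ M ↔ e ∈ T))
      = γ ^ T.card * wt γ (E.filter fun e => e ∉ S ∧ ∀ f ∈ T, ∀ v ∈ f, v ∉ e)
          (fun M => P (M ∪ T)) := by
  have hT' := mem_matchings.1 hT
  have h1 : wt γ E (fun M => P M ∧ ∀ e ∈ S, (e ∈ M ↔ e ∈ T))
      = ∑ M ∈ (matchings E).filter (fun M => ∀ e ∈ S, (e ∈ M ↔ e ∈ T)),
          if P M then γ ^ M.card else 0 := by
    unfold wt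
    rw [Finset.sum_filter]
    refine Finset.sum_congr rfl fun M _ => ?_
    by_cases h1 : P M <;> by_cases h2 : ∀ e ∈ S, (e ∈ M ↔ e ∈ T) <;> simp only [h1, h2] <;> simp
  have hdisj : ∀ M ∈ matchings (E.filter fun e => e ∉ S ∧ ∀ f ∈ T, ∀ v ∈ f, v ∉ e),
      Disjoint M T := by
    intro M hM
    rw [Finset.disjoint_left]
    intro a ha haT
    exact (Finset.mem_filter.1 ((mem_matchings.1 hM).1 ha)).2.1 (hTS haT)
  rw [h1]
  unfold wt
  rw [Finset.mul_sum]
  symm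
  refine Finset.sum_bij' (fun M _ => M ∪ T) (fun M _ => M \ T) ?_ ?_ ?_ ?_ ?_
  · intro M hM
    obtain ⟨h2, h3⟩ := mem_matchings.1 hM
    rw [Finset.mem_filter, mem_matchings]
    refine ⟨⟨Finset.union_subset (h2.trans (Finset.filter_subset _ _)) hT'.1, ?_⟩, ?_⟩
    · intro a ha b hb hab v hva hvb
      rw [Finset.mem_union] at ha hb
      rcases ha with ha | ha <;> rcases hb with hb | hb
      · exact h3 a ha b hb hab v hva hvb
      · exact (Finset.mem_filter.1 (h2 ha)).2.2 b hb v hvb hva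
      · exact (Finset.mem_filter.1 (h2 hb)).2.2 a ha v hva hvb
      · exact hT'.2 a ha b hb hab v hva hvb
    · intro e he
      rw [Finset.mem_union, or_iff_right]
      exact fun h => (Finset.mem_filter.1 (h2 h)).2.1 he
  · intro M hM
    rw [Finset.mem_filter, mem_matchings] at hM
    obtain ⟨⟨h2, h3⟩, h4⟩ := hM
    rw [mem_matchings]
    refine ⟨fun a ha => ?_, fun a ha b hb => h3 a (Finset.mem_sdiff.1 ha).1 b
      (Finset.mem_sdiff.1 hb).1⟩
    rw [Finset.mem_sdiff] at ha
    refine Finset.mem_filter.2 ⟨h2 ha.1, fun h => ha.2 ((h4 a h).1 ha.1), fun f hf => ?_⟩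
    exact h3 f ((h4 f (hTS hf)).2 hf) a ha.1 (fun h => ha.2 (h ▸ hf))
  · intro M hM
    rw [Finset.union_sdiff_right, Finset.sdiff_eq_self_of_disjoint (hdisj M hM)]
  · intro M hM
    rw [Finset.sdiff_union_of_subset]
    exact fun f hf => ((Finset.mem_filter.1 hM).2 f (hTS hf)).2 hf
  · intro M hM
    rw [Finset.card_union_of_disjoint (hdisj M hM), pow_add]
    split_ifs <;> ring

end Matchings

/-! ### Marginals, pinnings and the influence matrix -/

section Marginals

variable {V : Type*} [Fintype V] [DecidableEq V]

lemma pr_marginal (μ : (V → Bool) → ℝ) (U : Set V) (B : Set (↥U → Bool)) :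
    pr (marginal μ U) B = ∑ σ : V → Bool, if (fun u : ↥U => σ u.1) ∈ B then μ σ else 0 := by
  unfold pr marginal
  have : ∀ τ : ↥U → Bool, (if τ ∈ B then
      (∑ σ : V → Bool, if ∀ u : ↥U, σ u.1 = τ u then μ σ else 0) else 0)
      = ∑ σ : V → Bool, if (fun u : ↥U => σ u.1) = τ then
          (if (fun u : ↥U => σ u.1) ∈ B then μ σ else 0) else 0 := by
    intro τ
    by_cases h : τ ∈ B
    · rw [if_pos h]
      convert rfl using 2 with σ
      by_cases h2 : (fun u : ↥U => σ u.1) = τ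
      · rw [if_pos h2, if_pos (by rw [h2]; exact h), if_pos fun u => congrFun h2 u]
      · rw [if_neg h2, if_neg fun h3 => h2 (funext h3)]
    · rw [if_neg h]
      symm
      refine Finset.sum_eq_zero fun σ _ => ?_
      by_cases h2 : (fun u : ↥U => σ u.1) = τ
      · rw [if_pos h2, if_neg (by rw [h2]; exact h)]
      · rw [if_neg h2]
  trans ∑ τ : ↥U → Bool, ∑ σ : V → Bool, if (fun u : ↥U => σ u.1) = τ then
      (if (fun u : ↥U => σ u.1) ∈ B then μ σ else 0) else 0
  · refine Finset.sum_congr (by ext; simp) fun τ _ => ?_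
    convert this τ
  rw [Finset.sum_comm]
  refine Finset.sum_congr rfl fun σ _ => ?_
  simp

/-- The set of edges of `G`. -/
noncomputable def edges (G : SimpleGraph V) : Finset (Sym2 V) :=
  Finset.univ.filter fun e => e ∈ G.edgeSet

lemma isMatchingConf_iff (G : SimpleGraph V) (σ : Sym2 V → Bool) :
    IsMatchingConf G σ ↔ Finset.univ.filter (fun e => σ e = true) ∈ matchings (edges G) := by
  unfold IsMatchingConf
  rw [mem_matchings]
  simp only [Finset.mem_filter, Finset.mem_univ, true_and, Finset.subset_iff, edges]
  refine and_congr Iff.rfl ?_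
  constructor
  · intro h e he f hf; exact h e f he hf
  · intro h e f he hf; exact h e he f hf

/-- Probabilities under the marginal as normalised weights of sets of matchings. -/
lemma pr_md (G : SimpleGraph V) (γ : ℝ) (U : Set (Sym2 V)) (B : Set (↥U → Bool)) :
    pr (marginal (monomerDimer G γ) U) B
      = wt γ (edges G) (fun M => (fun u : ↥U => decide (u.1 ∈ M)) ∈ B) / part γ (edges G) := by
  have key : ∀ P : (Sym2 V → Bool) → Prop,
      ∑ σ : Sym2 V → Bool, (if P σ then mdWeight G γ σ else 0)
        = wt γ (edges G) (fun M => P fun e => decide (e ∈ M)) := by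
    intro P
    unfold wt
    have h1 : ∀ σ, (if P σ then mdWeight G γ σ else 0) =
        if Finset.univ.filter (fun e => σ e = true) ∈ matchings (edges G) then
          (if P σ then γ ^ (Finset.univ.filter (fun e => σ e = true)).card else 0) else 0 := by
      intro σ
      unfold mdWeight
      by_cases h : IsMatchingConf G σ
      · rw [if_pos h, if_pos ((isMatchingConf_iff G σ).1 h)]
      · rw [if_neg h, if_neg (fun h' => h ((isMatchingConf_iff G σ).2 h')), ite_self]
    rw [Finset.sum_congr rfl fun σ _ => h1 σ, ← Finset.sum_filter]
    refine Finset.sum_bij' (fun σ _ => Finset.univ.filter (fun e => σ e = true))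
      (fun M _ e => decide (e ∈ M)) ?_ ?_ ?_ ?_ ?_
    · intro σ hσ
      exact (Finset.mem_filter.1 hσ).2
    · intro M hM
      simpa using hM
    · intro σ _
      funext e
      simp
    · intro M _
      ext e
      simp
    · intro σ _
      simp
  rw [pr_marginal]
  have hZ : ∑ σ : Sym2 V → Bool, mdWeight G γ σ = part γ (edges G) := by
    have := key fun _ => True
    simp only [if_true] at this
    exact this
  have h2 := key fun σ => (fun u : ↥U => σ u.1) ∈ B
  rw [← h2, Finset.sum_div]
  refine Finset.sum_congr rfl fun σ _ => ?_
  unfold monomerDimer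
  rw [hZ]
  split_ifs <;> simp

/-- After a pinning of positive probability, the marginal is again governed by a monomer-dimer
model, on a subset `A` of the edges. -/
lemma exists_pinned (G : SimpleGraph V) {γ : ℝ} (hγ : 0 < γ) (U : Set (Sym2 V)) (S : Set ↥U)
    (τ : ↥U → Bool) (h0 : 0 < pr (marginal (monomerDimer G γ) U) (eventEq S τ)) :
    ∃ A ⊆ edges G, ∃ c : ℝ, 0 < c ∧ ∀ e g : ↥U, e ∉ S → g ∉ S → ∀ Q : Bool → Bool → Prop,
      pr (marginal (monomerDimer G γ) U) ({σ | Q (σ g) (σ e)} ∩ eventEq S τ)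
        = c * wt γ A (fun M => Q (decide (g.1 ∈ M)) (decide (e.1 ∈ M))) := by
  set S' : Finset (Sym2 V) := Finset.univ.filter fun e => ∃ h : e ∈ U, (⟨e, h⟩ : ↥U) ∈ S with hS'
  set T : Finset (Sym2 V) := Finset.univ.filter fun e =>
    ∃ h : e ∈ U, (⟨e, h⟩ : ↥U) ∈ S ∧ τ ⟨e, h⟩ = true with hTdef
  have hTS : T ⊆ S' := by
    intro e he
    simp only [hS', hTdef, Finset.mem_filter, Finset.mem_univ, true_and] at he ⊢
    obtain ⟨h, h1, _⟩ := he
    exact ⟨h, h1⟩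
  have hev : ∀ M : Finset (Sym2 V), (fun u : ↥U => decide (u.1 ∈ M)) ∈ eventEq S τ
      ↔ ∀ e ∈ S', (e ∈ M ↔ e ∈ T) := by
    intro M
    simp only [eventEq, Set.mem_ofPred_eq, hS', hTdef, Finset.mem_filter, Finset.mem_univ, true_and]
    constructor
    · rintro h e ⟨heU, heS⟩
      have := h _ heS
      constructor
      · intro heM
        exact ⟨heU, heS, by rw [← this]; simpa using heM⟩
      · rintro ⟨_, _, h3⟩
        rw [h3] at this
        simpa using this
    · intro h v hv
      have := h v.1 ⟨v.2, hv⟩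
      rw [Bool.eq_iff_iff, decide_eq_true_eq, this]
      constructor
      · rintro ⟨_, _, h3⟩; exact h3
      · intro h3; exact ⟨v.2, hv, h3⟩
  have hZ := part_pos hγ (edges G)
  have hT : T ∈ matchings (edges G) := by
    rw [pr_md G γ] at h0
    have h1 : wt γ (edges G) (fun M => (fun u : ↥U => decide (u.1 ∈ M)) ∈ eventEq S τ) ≠ 0 := by
      intro h; rw [h, zero_div] at h0; exact lt_irrefl _ h0
    obtain ⟨M, hM, hM2⟩ := Finset.exists_ne_zero_of_sum_ne_zero h1
    have hM3 : (fun u : ↥U => decide (u.1 ∈ M)) ∈ eventEq S τ := by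
      by_contra h; exact hM2 (if_neg h)
    rw [hev] at hM3
    have hTM : T ⊆ M := fun e he => (hM3 e (hTS he)).2 he
    rw [mem_matchings] at hM ⊢
    exact ⟨hTM.trans hM.1, fun a ha b hb => hM.2 a (hTM ha) b (hTM hb)⟩
  refine ⟨_, Finset.filter_subset (fun e => e ∉ S' ∧ ∀ f ∈ T, ∀ v ∈ f, v ∉ e) _,
    γ ^ T.card / part γ (edges G), by positivity, ?_⟩
  intro e g he hg Q
  have hnot : ∀ u : ↥U, u ∉ S → u.1 ∉ T := by
    intro u hu h
    simp only [hTdef, Finset.mem_filter, Finset.mem_univ, true_and] at h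
    exact hu h.2.1
  rw [pr_md G γ]
  have h1 : wt γ (edges G) (fun M => (fun u : ↥U => decide (u.1 ∈ M)) ∈
        {σ | Q (σ g) (σ e)} ∩ eventEq S τ)
      = wt γ (edges G) (fun M => Q (decide (g.1 ∈ M)) (decide (e.1 ∈ M)) ∧
          ∀ e ∈ S', (e ∈ M ↔ e ∈ T)) := by
    refine wt_congr γ fun M _ => ?_
    rw [Set.mem_inter_iff, hev]
    rfl
  rw [h1, wt_pin γ (edges G) S' T hTS hT, div_mul_eq_mul_div]
  congr 2
  refine wt_congr γ fun M _ => ?_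
  simp only [Finset.mem_union, hnot e he, hnot g hg, or_false]

lemma eigenvalue_le {ι : Type*} [Fintype ι] (M : Matrix ι ι ℝ) (R : ℝ)
    (h : ∀ p, ∑ q, |M p q| ≤ R) (t : ℝ) (x : ι → ℝ) (hx : x ≠ 0)
    (hM : M.mulVec x = t • x) : t ≤ R := by
  obtain ⟨i, hi⟩ := Function.ne_iff.1 hx
  obtain ⟨p, -, hp⟩ := Finset.exists_max_image Finset.univ (fun p => |x p|) ⟨i, Finset.mem_univ _⟩
  have hpos : 0 < |x p| := lt_of_lt_of_le (abs_pos.2 hi) (hp i (Finset.mem_univ _))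
  have h1 : |t| * |x p| ≤ R * |x p| := by
    rw [← abs_mul, ← smul_eq_mul, ← Pi.smul_apply, ← hM, Matrix.mulVec, dotProduct]
    calc |∑ q, M p q * x q| ≤ ∑ q, |M p q * x q| := Finset.abs_sum_le_sum_abs _ _
      _ ≤ ∑ q, |M p q| * |x p| := Finset.sum_le_sum fun q _ => by
          rw [abs_mul]
          exact mul_le_mul_of_nonneg_left (hp q (Finset.mem_univ _)) (abs_nonneg _)
      _ = (∑ q, |M p q|) * |x p| := by rw [Finset.sum_mul]
      _ ≤ _ := mul_le_mul_of_nonneg_right (h p) hpos.le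
  exact (le_abs_self t).trans (le_of_mul_le_mul_right h1 hpos)

/-- On a graph of maximum degree `K`, every marginal of the monomer-dimer model is
`4γK`-spectrally independent. -/
theorem spectrallyIndependent_of_degree (G : SimpleGraph V) {γ : ℝ} (hγ : 0 < γ) (K : ℝ)
    (hK : 0 ≤ K) (hdeg : ∀ v, (((edges G).filter (fun f => v ∈ f)).card : ℝ) ≤ K)
    (U : Set (Sym2 V)) :
    SpectrallyIndependent (marginal (monomerDimer G γ) U) (4 * γ * K) := by
  intro S τ _ h0 t x hx hM
  refine eigenvalue_le _ _ ?_ t x hx hM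
  clear hM hx x t
  obtain ⟨A, hAE, c, hc, hA⟩ := exists_pinned G hγ U S τ h0
  have hdeg' : ∀ w, ((A.filter (fun f => w ∈ f)).card : ℝ) ≤ K := fun w =>
    le_trans (Nat.cast_le.2 <| Finset.card_le_card <| Finset.filter_subset_filter _ hAE) (hdeg w)
  rintro ⟨⟨e, i⟩, heS, hpos⟩
  have hZ := part_pos hγ A
  have hS0 : pr (marginal (monomerDimer G γ) U) (eventEq S τ) = c * part γ A := by
    have := hA e e heS heS fun _ _ => True
    simp only [Set.ofPred_true, Set.univ_inter] at this
    exact this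
  have hSe : pr (marginal (monomerDimer G γ) U) (eventEq S τ ∩ eventVal e i)
      = c * wt γ A (fun M => decide (e.1 ∈ M) = i) := by
    rw [Set.inter_comm]
    exact hA e e heS heS fun _ b => b = i
  have h1 : ∀ g : ↥U, g ∉ S → ∀ k, cpr (marginal (monomerDimer G γ) U) (eventVal g k) (eventEq S τ)
      = wt γ A (fun M => decide (g.1 ∈ M) = k) / part γ A := by
    intro g hg k
    unfold cpr
    rw [hS0, ← mul_div_mul_left _ (part γ A) hc.ne']
    congr 1
    exact hA e g heS hg fun a _ => a = k
  have h2 : ∀ g : ↥U, g ∉ S → ∀ k, cpr (marginal (monomerDimer G γ) U) (eventVal g k)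
      (eventEq S τ ∩ eventVal e i)
      = wt γ A (fun M => decide (g.1 ∈ M) = k ∧ decide (e.1 ∈ M) = i)
          / wt γ A (fun M => decide (e.1 ∈ M) = i) := by
    intro g hg k
    unfold cpr
    rw [hSe, ← mul_div_mul_left _ (wt γ A (fun M => decide (e.1 ∈ M) = i)) hc.ne']
    congr 1
    have := hA e g heS hg fun a b => a = k ∧ b = i
    rw [← this]
    congr 1
    ext σ
    simp only [eventVal, Set.mem_inter_iff, Set.mem_ofPred_eq]
    tauto
  have hpos' : 0 < wt γ A (fun M => decide (e.1 ∈ M) = i) := by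
    rw [h1 e heS] at hpos
    exact (div_pos_iff_of_pos_right hZ).1 hpos
  let F : Sym2 V × Bool → ℝ := fun q => if e.1 = q.1 then 0 else
    |wt γ A (fun M => decide (q.1 ∈ M) = q.2 ∧ decide (e.1 ∈ M) = i)
          / wt γ A (fun M => decide (e.1 ∈ M) = i)
        - wt γ A (fun M => decide (q.1 ∈ M) = q.2) / part γ A|
  have hF : ∀ q, 0 ≤ F q := fun q => by
    simp only [F]; split_ifs; exacts [le_rfl, abs_nonneg _]
  have hsum : ∑ q, F q ≤ 4 * γ * K := by
    rw [Fintype.sum_prod_type_right]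
    have : ∀ k : Bool, ∑ g, F (g, k) ≤ 2 * (γ * K) := by
      intro k
      refine le_trans (le_of_eq ?_) (row_sum hγ K hK A hdeg' e.1 i k hpos')
      rw [← Finset.sum_erase (a := e.1) Finset.univ (by simp [F])]
      refine Finset.sum_congr rfl fun g hg => ?_
      simp only [F]
      rw [if_neg (Ne.symm (Finset.mem_erase.1 hg).1)]
    rw [Fintype.sum_bool]
    linarith [this true, this false]
  refine le_trans (le_trans (le_of_eq ?_) (Finset.sum_le_univ_sum_of_nonneg hF
    (s := Finset.univ.image fun q : {p : ↥U × Bool // p.1 ∉ S ∧ 0 < cpr (marginal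
      (monomerDimer G γ) U) (eventVal p.1 p.2) (eventEq S τ)} => (q.1.1.1, q.1.2)))) hsum
  rw [Finset.sum_image]
  · refine Finset.sum_congr rfl ?_
    rintro ⟨⟨g, k⟩, hg, -⟩ -
    simp only [Matrix.of_apply, F, ← Subtype.ext_iff]
    by_cases h : e = g
    · simp [h]
    · rw [if_neg h, if_neg h, h1 g hg, h2 g hg]
  · rintro ⟨⟨g, k⟩, _⟩ _ ⟨⟨g', k'⟩, _⟩ _ h
    simp only [Prod.mk.injEq] at h
    simp only [Subtype.mk.injEq, Prod.mk.injEq]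
    exact ⟨Subtype.ext h.1, h.2⟩

end Marginals

/-! ### The maximum degree of the random graph -/

section RandomGraph

/-- The edges of the complete graph on `Fin n`. -/
noncomputable def allEdges (n : ℕ) : Finset (Sym2 (Fin n)) := edges (⊤ : SimpleGraph (Fin n))

lemma card_allEdges (n : ℕ) : (allEdges n).card = n.choose 2 := by
  have h := SimpleGraph.card_edgeFinset_top_eq_card_choose_two (V := Fin n)
  rw [Fintype.card_fin] at h
  rw [← h]
  congr 1
  ext e
  simp [allEdges, edges]

lemma edgeCount_eq {n : ℕ} (G : SimpleGraph (Fin n)) : edgeCount G = (edges G).card := by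
  unfold edgeCount edges
  rw [Nat.card_eq_fintype_card, Fintype.card_subtype]

/-- Graphs on `Fin n` correspond to sets of edges of the complete graph. -/
lemma sum_graphs {n : ℕ} (φ : Finset (Sym2 (Fin n)) → ℝ) :
    ∑ G : SimpleGraph (Fin n), φ (edges G) = ∑ E ∈ (allEdges n).powerset, φ E := by
  refine Finset.sum_bij' (fun G _ => edges G)
    (fun E _ => SimpleGraph.fromEdgeSet (E : Set (Sym2 (Fin n)))) ?_ ?_ ?_ ?_ ?_
  · intro G _
    rw [Finset.mem_powerset]
    intro e he
    simp only [allEdges, edges, Finset.mem_filter, Finset.mem_univ, true_and] at he ⊢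
    exact SimpleGraph.edgeSet_mono le_top he
  · intro E _
    exact Finset.mem_univ _
  · intro G _
    simp [edges]
  · intro E hE
    rw [Finset.mem_powerset] at hE
    ext e
    simp only [edges, Finset.mem_filter, Finset.mem_univ, true_and, SimpleGraph.edgeSet_fromEdgeSet,
      Set.mem_sdiff, Finset.mem_coe, and_iff_left_iff_imp]
    intro he
    have := hE he
    simp only [allEdges, edges, Finset.mem_filter, Finset.mem_univ, true_and,
      SimpleGraph.edgeSet_top] at this
    exact this
  · intro G _
    rfl

/-- The moment generating function, at `log s`, of the number of edges at `v` in `G(n,p)`. -/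
lemma mgf_degree {n : ℕ} {p s : ℝ} (hp0 : 0 ≤ p) (hp1 : p ≤ 1) (hs : 1 ≤ s) (v : Fin n) :
    ∑ G : SimpleGraph (Fin n), p ^ edgeCount G * (1 - p) ^ (n.choose 2 - edgeCount G)
        * s ^ ((edges G).filter (fun f => v ∈ f)).card
      ≤ Real.exp (p * (s - 1) * n) := by
  simp only [edgeCount_eq]
  rw [sum_graphs (fun E => p ^ E.card * (1 - p) ^ (n.choose 2 - E.card)
    * s ^ (E.filter (fun f => v ∈ f)).card)]
  have h1 : ∀ E ∈ (allEdges n).powerset, p ^ E.card * (1 - p) ^ (n.choose 2 - E.card)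
        * s ^ (E.filter (fun f => v ∈ f)).card
      = (∏ e ∈ E, p * (if v ∈ e then s else 1)) * ∏ e ∈ allEdges n \ E, (1 - p) := by
    intro E hE
    rw [Finset.mem_powerset] at hE
    rw [Finset.prod_mul_distrib, Finset.prod_const, Finset.prod_const, Finset.card_sdiff_of_subset hE,
      card_allEdges, Finset.prod_ite, Finset.prod_const, Finset.prod_const_one]
    ring
  rw [Finset.sum_congr rfl h1, ← Finset.prod_add]
  calc ∏ e ∈ allEdges n, (p * (if v ∈ e then s else 1) + (1 - p))
      ≤ ∏ e ∈ allEdges n, Real.exp (if v ∈ e then p * (s - 1) else 0) := by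
        refine Finset.prod_le_prod (fun e _ => ?_) (fun e _ => ?_)
        · have : 0 ≤ p * (if v ∈ e then s else 1) := by split_ifs <;> nlinarith
          linarith
        · split_ifs
          · have := Real.add_one_le_exp (p * (s - 1))
            linarith
          · simp
    _ = Real.exp (((allEdges n).filter (fun e => v ∈ e)).card * (p * (s - 1))) := by
        rw [← Real.exp_sum, ← Finset.sum_filter, Finset.sum_const, nsmul_eq_mul]
    _ ≤ Real.exp (p * (s - 1) * n) := by
        rw [Real.exp_le_exp, mul_comm]
        refine mul_le_mul_of_nonneg_left ?_ (mul_nonneg hp0 (by linarith))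
        have h2 : (allEdges n).filter (fun e => v ∈ e)
            ⊆ Finset.univ.image (fun u : Fin n => s(v, u)) := by
          intro e he
          obtain ⟨u, rfl⟩ := (Finset.mem_filter.1 he).2
          exact Finset.mem_image_of_mem _ (Finset.mem_univ u)
        have h3 := (Finset.card_le_card h2).trans Finset.card_image_le
        rw [Finset.card_univ, Fintype.card_fin] at h3
        exact_mod_cast h3

lemma erProb_total (n : ℕ) (p : ℝ) : ∑ G : SimpleGraph (Fin n),
    p ^ edgeCount G * (1 - p) ^ (n.choose 2 - edgeCount G) = 1 := by
  simp only [edgeCount_eq]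
  rw [sum_graphs (fun E => p ^ E.card * (1 - p) ^ (n.choose 2 - E.card)), ← card_allEdges,
    Finset.sum_pow_mul_eq_add_pow]
  simp

lemma erProb_le_one {n : ℕ} {p : ℝ} (hp0 : 0 ≤ p) (hp1 : p ≤ 1) (P) : erProb n p P ≤ 1 := by
  rw [← erProb_total n p]
  unfold erProb
  refine Finset.sum_le_sum fun G _ => ?_
  have : 0 ≤ 1 - p := by linarith
  split_ifs
  · exact le_rfl
  · positivity

/-- A Chernoff bound for the maximum degree of `G(n,p)`, stated for any property that holds
once all degrees are at most `K`. -/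
lemma erProb_ge {n : ℕ} {p s K : ℝ} (hp0 : 0 ≤ p) (hp1 : p ≤ 1) (hs : 1 ≤ s)
    (P : SimpleGraph (Fin n) → Prop)
    (hP : ∀ G : SimpleGraph (Fin n),
      (∀ v, (((edges G).filter (fun f => v ∈ f)).card : ℝ) ≤ K) → P G) :
    1 - n * (Real.exp (p * (s - 1) * n) * s ^ (-K)) ≤ erProb n p P := by
  have hs0 : 0 < s := by linarith
  have hq : 0 ≤ 1 - p := by linarith
  have h1 : ∀ G : SimpleGraph (Fin n), p ^ edgeCount G * (1 - p) ^ (n.choose 2 - edgeCount G)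
      ≤ (if P G then p ^ edgeCount G * (1 - p) ^ (n.choose 2 - edgeCount G) else 0)
        + ∑ v : Fin n, p ^ edgeCount G * (1 - p) ^ (n.choose 2 - edgeCount G)
          * s ^ ((edges G).filter (fun f => v ∈ f)).card * s ^ (-K) := by
    intro G
    have hw : 0 ≤ p ^ edgeCount G * (1 - p) ^ (n.choose 2 - edgeCount G) := by positivity
    have hterm : ∀ v : Fin n, 0 ≤ p ^ edgeCount G * (1 - p) ^ (n.choose 2 - edgeCount G)
          * s ^ ((edges G).filter (fun f => v ∈ f)).card * s ^ (-K) := fun v => by positivity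
    by_cases h : P G
    · rw [if_pos h]
      have := Finset.sum_nonneg fun v (_ : v ∈ (Finset.univ : Finset (Fin n))) => hterm v
      linarith
    · rw [if_neg h, zero_add]
      have : ¬ ∀ v, (((edges G).filter (fun f => v ∈ f)).card : ℝ) ≤ K := fun h' => h (hP G h')
      push Not at this
      obtain ⟨v, hv⟩ := this
      refine le_trans ?_ (Finset.single_le_sum (fun v _ => hterm v) (Finset.mem_univ v))
      rw [mul_assoc, ← Real.rpow_natCast s, ← Real.rpow_add hs0]
      exact le_mul_of_one_le_right hw (Real.one_le_rpow hs (by linarith))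
  have h2 := Finset.sum_le_sum fun G (_ : G ∈ (Finset.univ : Finset (SimpleGraph (Fin n)))) => h1 G
  rw [erProb_total, Finset.sum_add_distrib, Finset.sum_comm] at h2
  have h3 : ∑ v : Fin n, ∑ G : SimpleGraph (Fin n),
      p ^ edgeCount G * (1 - p) ^ (n.choose 2 - edgeCount G)
          * s ^ ((edges G).filter (fun f => v ∈ f)).card * s ^ (-K)
      ≤ ∑ v : Fin n, Real.exp (p * (s - 1) * n) * s ^ (-K) := by
    refine Finset.sum_le_sum fun v _ => ?_
    rw [← Finset.sum_mul]
    exact mul_le_mul_of_nonneg_right (mgf_degree hp0 hp1 hs v) (by positivity)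
  rw [Finset.sum_const, Finset.card_univ, Fintype.card_fin, nsmul_eq_mul] at h3
  unfold erProb
  linarith

end RandomGraph

/-- for `d ≥ 1` and `γ > 0`, for any constants `D, ε > 0`, whp over
`G ∼ G(n,d/n)` the marginal of the monomer-dimer distribution on the set of edges both of
whose endpoints have degree at most `D` is `(ε log n)`-spectrally independent. -/
theorem stmt9 (d γ : ℝ) (hd : 1 ≤ d) (hγ : 0 < γ) (D ε : ℝ) (hD : 0 < D) (hε : 0 < ε) :
    Filter.Tendsto (fun n : ℕ => erProb n (d / n) (fun G =>
        SpectrallyIndependent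
          (marginal (monomerDimer G γ)
            {e : Sym2 (Fin n) | e ∈ G.edgeSet ∧ ∀ v ∈ e, (deg G v : ℝ) ≤ D})
          (ε * Real.log n)))
      Filter.atTop (nhds 1) := by
  -- a degree bound `K` gives `4γK = ε log n`; tilting by `s = exp (8γ/ε)` gives `s ^ (-K) = n⁻²`
  set s : ℝ := Real.exp (8 * γ / ε) with hs
  have hs1 : 1 ≤ s := Real.one_le_exp (by positivity)
  have hlim : Tendsto (fun n : ℕ => 1 - Real.exp (d * (s - 1)) * (n : ℝ)⁻¹) atTop (nhds 1) := by
    have := (tendsto_inv_atTop_nhds_zero_nat (𝕜 := ℝ)).const_mul (Real.exp (d * (s - 1)))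
    simpa using this.const_sub 1
  have hev : ∀ᶠ n : ℕ in atTop, d ≤ n := tendsto_natCast_atTop_atTop.eventually_ge_atTop d
  have hd0 : 0 < d := by linarith
  refine tendsto_of_tendsto_of_tendsto_of_le_of_le' hlim tendsto_const_nhds ?_ ?_
  · filter_upwards [hev] with n hn
    have hn0 : (0:ℝ) < n := by linarith
    have hp1 : d / n ≤ 1 := (div_le_one hn0).2 hn
    have hlog : 0 ≤ Real.log n := Real.log_nonneg (by linarith)
    have h := erProb_ge (K := ε * Real.log n / (4 * γ)) (by positivity) hp1 hs1
      (fun G : SimpleGraph (Fin n) => SpectrallyIndependent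
          (marginal (monomerDimer G γ)
            {e : Sym2 (Fin n) | e ∈ G.edgeSet ∧ ∀ v ∈ e, (deg G v : ℝ) ≤ D})
          (ε * Real.log n)) (fun G hG => by
        have h := spectrallyIndependent_of_degree G hγ _ (by positivity) hG
          {e : Sym2 (Fin n) | e ∈ G.edgeSet ∧ ∀ v ∈ e, (deg G v : ℝ) ≤ D}
        rw [mul_div_cancel₀ _ (by positivity : 4 * γ ≠ 0)] at h
        convert h)
    refine le_trans (le_of_eq ?_) h
    have e1 : d / n * (s - 1) * n = d * (s - 1) := by field_simp
    have e2 : s ^ (-(ε * Real.log n / (4 * γ))) = (n:ℝ)⁻¹ * (n:ℝ)⁻¹ := by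
      rw [hs, ← Real.exp_mul]
      have : 8 * γ / ε * -(ε * Real.log n / (4 * γ)) = -Real.log n + -Real.log n := by
        field_simp; ring
      rw [this, Real.exp_add, Real.exp_neg, Real.exp_log hn0]
    rw [e1, e2]
    field_simp
  · filter_upwards [hev] with n hn
    have hn0 : (0:ℝ) < n := by linarith
    exact erProb_le_one (by positivity) ((div_le_one hn0).2 hn) _
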